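/- Let α be a partition with all parts at least 2 with overlapping partition p, let ν be a partition of |α|, and let T ∈ Tab(ν,α). (a) If φ_{R_α^p}(T) is an LR tableau (i.e. T is the companion tableau of an LR filling of R_α^p), then the descent set of T̂ has at least p_1 elements. (b) If T has no negligible critical numbers and its critical set is nonempty, then φ_{R_α^p}(T) is an LR tableau if and only if every critical number of T is p-ineffective. -/

import Mathlib

/-!
The word of `T` lists the rows of the cells in the order of the key `(entry, column)`.
Semistandardness alone makes this word weakly decreasing along every block of equal entries,
Yamanouchi, and of content `nu`. So the filling of the ribbon is an LR tableau exactly when the word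
strictly increases at every gap between overlapping rows. Such an ascent is a descent of the
standardization, and there are `p₁` overlapping gaps; a gap without an ascent is a critical number
or a negligible critical number.
-/

namespace RibbonSupport

/-- A partition: a weakly decreasing list of positive integers. -/
def IsPartition (a : List ℕ) : Prop := a.Pairwise (· ≥ ·) ∧ ∀ x ∈ a, 0 < x

/-- All parts of the list are at least `m`. -/
def PartsGE (a : List ℕ) (m : ℕ) : Prop := ∀ x ∈ a, m ≤ x

/-- Dominance order `lam ⪯ mu` on partitions of the same size. -/
def DomLE (lam mu : List ℕ) : Prop :=
  lam.sum = mu.sum ∧ ∀ i, (lam.take i).sum ≤ (mu.take i).sum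

/-- The number of nonzero parts. -/
def lenp (p : List ℕ) : ℕ := p.countP (fun x => decide (x ≠ 0))

/-- `p` is an overlapping partition for the monotone ribbon with row lengths `a`:
`p` has the same length as `a`, its last entry is `0`, and consecutive entries
decrease by `0` or `1`. -/
def IsOverlapSeq (a p : List ℕ) : Prop :=
  p.length = a.length ∧ p.getD (a.length - 1) 0 = 0 ∧
    ∀ i, i + 1 < a.length →
      p.getD i 0 = p.getD (i + 1) 0 ∨ p.getD i 0 = p.getD (i + 1) 0 + 1

/-- Rows `i` and `i+1` (0-based, top to bottom) of `R_a^p` overlap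
(share exactly one column) exactly when `p_i = p_{i+1} + 1`. -/
def ovOf (p : List ℕ) : ℕ → Bool := fun i => decide (p.getD i 0 = p.getD (i + 1) 0 + 1)

def rowOffset (a : List ℕ) (i : ℕ) : ℕ := (a.take i).sum

/-- `w` is the reading word (rows right-to-left, top to bottom) of a semistandard filling of
the ribbon with row lengths `a` (top to bottom) in which consecutive rows `i`, `i+1` share
exactly one column when `ov i = true` and no column otherwise.  Semistandardness amounts to:
within each row block the word is weakly decreasing (rows weakly increase left to right), and
at each overlapping gap the word strictly increases (columns strictly increase downwards). -/
def IsRibbonWord (a : List ℕ) (ov : ℕ → Bool) (w : List ℕ) : Prop :=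
  w.length = a.sum ∧
  (∀ i j, i < a.length → j + 1 < a.getD i 0 →
    w.getD (rowOffset a i + j + 1) 0 ≤ w.getD (rowOffset a i + j) 0) ∧
  (∀ i, i + 1 < a.length → ov i = true →
    w.getD (rowOffset a (i + 1) - 1) 0 < w.getD (rowOffset a (i + 1)) 0)

/-- Yamanouchi (lattice) word: each prefix has at least as many letters `j` as `j+1`. -/
def IsYam (w : List ℕ) : Prop := ∀ k j, (w.take k).count (j + 2) ≤ (w.take k).count (j + 1)

/-- The word `w` has content `nu` (and only positive letters). -/
def HasContent (w : List ℕ) (nu : List ℕ) : Prop :=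
  (∀ j, w.count (j + 1) = nu.getD j 0) ∧ w.count 0 = 0

/-- There is an LR filling of the ribbon `(a, ov)` with content `nu`. -/
def InSupportOv (a : List ℕ) (ov : ℕ → Bool) (nu : List ℕ) : Prop :=
  ∃ w : List ℕ, IsRibbonWord a ov w ∧ IsYam w ∧ HasContent w nu

/-- `nu` is in the Schur support of the monotone ribbon `R_a^p`. -/
def InSupport (a p nu : List ℕ) : Prop := InSupportOv a (ovOf p) nu

/-- `nu` is in the Schur support of the connected ribbon `R_a`. -/
def InSupportConn (a nu : List ℕ) : Prop := InSupportOv a (fun _ => true) nu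

/-- `nu` belongs to the Schur interval `[a, (|a| - p₁, p₁)]` in dominance order. -/
def InInterval (a p nu : List ℕ) : Prop :=
  DomLE a nu ∧ DomLE nu [a.sum - p.getD 0 0, p.getD 0 0]

/-- The Schur support of `R_a^p`, as a set of partitions. -/
def SupportSet (a p : List ℕ) : Set (List ℕ) := {nu | IsPartition nu ∧ InSupport a p nu}

/-- The Schur interval of `R_a^p`, as a set of partitions. -/
def IntervalSet (a p : List ℕ) : Set (List ℕ) := {nu | IsPartition nu ∧ InInterval a p nu}

/-- `R_a^p` has full Schur support. -/
def FullSupport (a p : List ℕ) : Prop := SupportSet a p = IntervalSet a p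

/-- The Schur support of the connected ribbon `R_a`, as a set of partitions. -/
def SupportSetConn (a : List ℕ) : Set (List ℕ) := {nu | IsPartition nu ∧ InSupportConn a nu}

/-- `ϱ_i` (1-based `i`): `Σ_{q=i+1}^{ℓ(a)} a_q − p_{i+1} + 1`. -/
def rho (a p : List ℕ) (i : ℕ) : ℕ := (a.drop i).sum + 1 - p.getD i 0

/-- Entry `j` (1-based) of the `i`-witness vector: `[ϱ_i − a_j]₊`. -/
def wit (a p : List ℕ) (i j : ℕ) : ℕ := rho a p i - a.getD (j - 1) 0

/-- Size of the `i`-witness vector. -/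
def witSize (a p : List ℕ) (i : ℕ) : ℕ := ∑ j ∈ Finset.Icc 1 i, wit a p i j

/-! ### Tableaux -/

/-- Cells (0-based `(row, column)`) of the Young diagram of `lam`. -/
def cells (lam : List ℕ) : Finset (ℕ × ℕ) :=
  (Finset.range lam.length ×ˢ Finset.range (lam.sum + 1)).filter
    (fun x => x.2 < lam.getD x.1 0)

/-- `T` is a semistandard Young tableau of shape `lam` and content `al`
(normalized to vanish off the diagram). -/
def IsTab (lam al : List ℕ) (T : ℕ × ℕ → ℕ) : Prop :=
  (∀ x, x ∉ cells lam → T x = 0) ∧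
  (∀ x ∈ cells lam, 1 ≤ T x) ∧
  (∀ i c, (i, c + 1) ∈ cells lam → T (i, c) ≤ T (i, c + 1)) ∧
  (∀ i c, (i + 1, c) ∈ cells lam → T (i, c) < T (i + 1, c)) ∧
  (∀ k, ((cells lam).filter (fun x => T x = k + 1)).card = al.getD k 0)

/-- Standardization of a tableau: entries are renumbered `1, …, N` in increasing order of
value, entries of equal value being numbered from southwest to northeast (by column). -/
def stdz (lam : List ℕ) (T : ℕ × ℕ → ℕ) : ℕ × ℕ → ℕ := fun x =>
  if x ∈ cells lam then
    ((cells lam).filter (fun y => T y < T x ∨ (T y = T x ∧ y.2 < x.2))).card + 1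
  else 0

/-- `n` is a descent of the standard tableau `U`: the entry `n+1` lies in a strictly
lower row than the entry `n`. -/
def IsDescent (lam : List ℕ) (U : ℕ × ℕ → ℕ) (n : ℕ) : Prop :=
  ∃ x ∈ cells lam, ∃ y ∈ cells lam, U x = n ∧ U y = n + 1 ∧ x.1 < y.1

/-- `S(al)`: the set of proper partial sums of the composition `al`. -/
def Sset (al : List ℕ) : Set ℕ := {n | ∃ k, 0 < k ∧ k < al.length ∧ n = (al.take k).sum}

/-- `s ∈ D(T)`: some entry `s+1` of `T` lies in a strictly lower row than some entry `s`. -/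
def TabDescent (lam : List ℕ) (T : ℕ × ℕ → ℕ) (s : ℕ) : Prop :=
  ∃ x ∈ cells lam, ∃ y ∈ cells lam, T x = s ∧ T y = s + 1 ∧ x.1 < y.1

/-- The word `w_{T̂}` of `T`: its `u`-th letter (1-based) is the 1-based row index of the
entry `u` of the standardization `T̂` of `T`. -/
def wordOf (lam : List ℕ) (T : ℕ × ℕ → ℕ) : List ℕ :=
  (List.range lam.sum).map fun n =>
    ∑ x ∈ (cells lam).filter (fun x => stdz lam T x = n + 1), (x.1 + 1)

/-- `j ∈ {2, …, ℓ(al)}` is a critical number of `T ∈ Tab(lam, al)`: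
`w_{α_1+⋯+α_{j-1}} = w_{α_1+⋯+α_{j-1}+1}` in the word of `T`. -/
def CriticalNum (lam al : List ℕ) (T : ℕ × ℕ → ℕ) (j : ℕ) : Prop :=
  2 ≤ j ∧ j ≤ al.length ∧
    (wordOf lam T).getD ((al.take (j - 1)).sum - 1) 0 =
      (wordOf lam T).getD ((al.take (j - 1)).sum) 0

/-- `j ∈ {2, …, ℓ(al)}` is a negligible critical number of `T`:
`w_{α_1+⋯+α_{j-1}} > w_{α_1+⋯+α_{j-1}+1}` in the word of `T`. -/
def NegligibleNum (lam al : List ℕ) (T : ℕ × ℕ → ℕ) (j : ℕ) : Prop :=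
  2 ≤ j ∧ j ≤ al.length ∧
    (wordOf lam T).getD ((al.take (j - 1)).sum) 0 <
      (wordOf lam T).getD ((al.take (j - 1)).sum - 1) 0

/-- The overlapping partition of the ribbon encoded by its gap pattern `b`
(`b j = true` iff rows `j` and `j+1`, 0-based, overlap). -/
def povOf (b : List Bool) : List ℕ :=
  (List.range (b.length + 1)).map fun i => (b.drop i).count true

/-! ### Connected ribbons with rows in arbitrary order -/

/-- Starting column (0-based) of row `i` of the connected ribbon with row lengths `b`. -/
def startConn (b : List ℕ) (i : ℕ) : ℕ := (b.drop (i + 1)).sum + (i + 1) - b.length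

/-- Number of columns of the connected ribbon with row lengths `b`. -/
def ncols (b : List ℕ) : ℕ := b.sum + 1 - b.length

/-- Length of column `c` of the connected ribbon with row lengths `b`. -/
def colLen (b : List ℕ) (c : ℕ) : ℕ :=
  ((Finset.range b.length).filter
    (fun i => startConn b i ≤ c ∧ c < startConn b i + b.getD i 0)).card

/-- Deletion rank of row `j`: the number of rows deleted strictly before row `j` when one
repeatedly deletes a longest remaining row in highest (most northern) position. -/
def delRank (g : List ℕ) (j : ℕ) : ℕ :=
  ((Finset.range g.length).filter
    (fun j' => g.getD j 0 < g.getD j' 0 ∨ (g.getD j' 0 = g.getD j 0 ∧ j' < j))).card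

/-- The overlapping partition of the connected ribbon with row lengths `g`:
its `(d+1)`-st entry is the number of length-two columns of the ribbon remaining
after deleting `d` rows as above, i.e. the number of adjacent pairs of surviving rows. -/
def ppiList (g : List ℕ) : List ℕ :=
  (List.range g.length).map fun d =>
    ((Finset.range (g.length - 1)).filter
      (fun j => d ≤ delRank g j ∧ d ≤ delRank g (j + 1))).card

/-! ### Ranks with respect to a key -/

section KeyRank

variable {ι β : Type*} [LinearOrder β] {s : Finset ι} {f : ι → β} {x y : ι}

/-- The rank of `x` among the elements of `s` sorted by the key `f`: the number of elements of `s`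
whose key is smaller than that of `x`. Ranks start at `0`. -/
def keyRank (s : Finset ι) (f : ι → β) (x : ι) : ℕ := (s.filter fun y => f y < f x).card

theorem keyRank_lt_keyRank_iff (hx : x ∈ s) : keyRank s f x < keyRank s f y ↔ f x < f y := by
  refine ⟨fun h => ?_, fun h => Finset.card_lt_card ?_⟩
  · contrapose! h
    exact Finset.card_le_card
      (Finset.monotone_filter_right s fun _ _ hz => lt_of_lt_of_le hz h)
  · refine (Finset.ssubset_iff_of_subset ?_).2 ⟨x, by simp [hx, h], by simp⟩
    exact Finset.monotone_filter_right s fun _ _ hz => lt_trans hz h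

theorem keyRank_lt_card (hx : x ∈ s) : keyRank s f x < s.card :=
  Finset.card_lt_card (Finset.filter_ssubset.2 ⟨x, hx, lt_irrefl _⟩)

theorem bijOn_keyRank (hf : Set.InjOn f s) : Set.BijOn (keyRank s f) s (Finset.range s.card) := by
  have maps : Set.MapsTo (keyRank s f) s (Finset.range s.card) := fun x hx =>
    Finset.mem_coe.2 (Finset.mem_range.2 (keyRank_lt_card hx))
  have inj : Set.InjOn (keyRank s f) s := fun x hx y hy hxy => by
    refine hf hx hy (le_antisymm ?_ ?_) <;> rw [← not_lt]
    · exact fun h => ((keyRank_lt_keyRank_iff hy).2 h).ne' hxy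
    · exact fun h => ((keyRank_lt_keyRank_iff hx).2 h).ne hxy
  exact ⟨maps, inj, Finset.surjOn_of_injOn_of_card_le _ maps inj (by simp)⟩

end KeyRank

/-! ### Lists of natural numbers and partial sums -/

theorem count_take_eq_card_filter_range {α : Type*} [DecidableEq α] (w : List α) (k : ℕ) (b d : α) :
    (w.take k).count b = ((Finset.range (min k w.length)).filter (w.getD · d = b)).card := by
  have hw : w.take k = (List.range (min k w.length)).map (w.getD · d) := by
    refine List.ext_getElem (by simp) fun n hn _ => ?_
    have : n < w.length := by rw [List.length_take] at hn; omega
    simp [this]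
  rw [hw, List.count, List.countP_map, ← Nat.count_eq_card_filter_range, Nat.count]
  rfl

theorem rowOffset_succ (a : List ℕ) (i : ℕ) :
    rowOffset a (i + 1) = rowOffset a i + a.getD i 0 := by
  rw [rowOffset, rowOffset]
  by_cases hi : i < a.length
  · rw [List.sum_take_succ a i hi, List.getD_eq_getElem _ _ hi]
  · rw [List.getD_eq_default _ _ (by omega), List.take_of_length_le (by omega),
      List.take_of_length_le (by omega), add_zero]

theorem rowOffset_eq_sum {a : List ℕ} {k : ℕ} (hk : a.length ≤ k) : rowOffset a k = a.sum := by
  rw [rowOffset, List.take_of_length_le hk]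

theorem rowOffset_le_sum (a : List ℕ) (i : ℕ) : rowOffset a i ≤ a.sum := by
  rw [← rowOffset_eq_sum (le_max_right i a.length)]
  exact a.monotone_sum_take (le_max_left i a.length)

theorem sum_range_getD (a : List ℕ) (k : ℕ) :
    ∑ i ∈ Finset.range k, a.getD i 0 = rowOffset a k := by
  induction k with
  | zero => simp [rowOffset]
  | succ k ih => rw [Finset.sum_range_succ, ih, rowOffset_succ]

theorem strictMonoOn_rowOffset {a : List ℕ} (ha : ∀ x ∈ a, 0 < x) :
    StrictMonoOn (rowOffset a) (Set.Iic a.length) := by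
  refine strictMonoOn_of_lt_succ Set.ordConnected_Iic fun i _ _ hi => ?_
  have hi : i < a.length := Set.mem_Iic.1 hi
  rw [Nat.succ_eq_succ, rowOffset_succ, List.getD_eq_getElem _ _ hi]
  exact Nat.lt_add_of_pos_right (ha _ (List.getElem_mem hi))

theorem IsOverlapSeq.getD_zero_eq_add_card {a p : List ℕ} (hp : IsOverlapSeq a p) {k : ℕ}
    (hk : k < a.length) :
    p.getD 0 0 = p.getD k 0 + ((Finset.range k).filter (fun i => ovOf p i = true)).card := by
  induction k with
  | zero => simp
  | succ k ih =>
    have step : p.getD k 0 = p.getD (k + 1) 0 + if ovOf p k = true then 1 else 0 := by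
      have := hp.2.2 k hk
      simp only [ovOf, decide_eq_true_eq]
      split_ifs <;> omega
    rw [ih (Nat.lt_of_succ_lt hk), step, Finset.card_filter, Finset.card_filter,
      Finset.sum_range_succ]
    omega

theorem IsOverlapSeq.getD_zero_eq_card {a p : List ℕ} (hp : IsOverlapSeq a p) :
    p.getD 0 0 = ((Finset.range (a.length - 1)).filter (fun i => ovOf p i = true)).card := by
  rcases Nat.eq_zero_or_pos a.length with h | h
  · rw [List.getD_eq_default p 0 (hp.1.trans h).le, h, Finset.range_zero, Finset.filter_empty,
      Finset.card_empty]
  · rw [hp.getD_zero_eq_add_card (Nat.sub_one_lt h.ne'), hp.2.1, zero_add]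

/-! ### Young diagrams -/

theorem mem_cells {lam : List ℕ} {x : ℕ × ℕ} : x ∈ cells lam ↔ x.2 < lam.getD x.1 0 := by
  simp only [cells, Finset.mem_filter, Finset.mem_product, Finset.mem_range,
    and_iff_right_iff_imp]
  intro h
  have hl : x.1 < lam.length := by
    by_contra hc
    rw [List.getD_eq_default _ _ (not_lt.1 hc)] at h
    exact Nat.not_lt_zero _ h
  rw [List.getD_eq_getElem _ _ hl] at h
  have := List.le_sum_of_mem (List.getElem_mem hl)
  omega

theorem card_filter_row_cells (lam : List ℕ) (r : ℕ) :
    ((cells lam).filter (fun x => x.1 = r)).card = lam.getD r 0 := by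
  have hrow : (cells lam).filter (fun x => x.1 = r) = {r} ×ˢ Finset.range (lam.getD r 0) := by
    ext ⟨i, c⟩
    simp only [Finset.mem_filter, mem_cells, Finset.mem_product, Finset.mem_singleton,
      Finset.mem_range]
    rw [and_comm]
    exact and_congr_right fun hi => by rw [hi]
  rw [hrow, Finset.card_product, Finset.card_singleton, Finset.card_range, one_mul]

theorem card_cells (lam : List ℕ) : (cells lam).card = lam.sum := by
  have hrow : ∀ x ∈ cells lam, x.1 ∈ Finset.range lam.length := fun x hx =>
    (Finset.mem_product.1 (Finset.mem_filter.1 hx).1).1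
  rw [Finset.card_eq_sum_card_fiberwise hrow]
  simp only [card_filter_row_cells, sum_range_getD, rowOffset_eq_sum le_rfl]

theorem IsPartition.antitone_getD {lam : List ℕ} (h : IsPartition lam) :
    Antitone (lam.getD · 0) := by
  refine antitone_nat_of_succ_le fun i => ?_
  by_cases hi : i + 1 < lam.length
  · rw [List.getD_eq_getElem _ _ hi, List.getD_eq_getElem _ _ (Nat.lt_of_succ_lt hi)]
    exact List.pairwise_iff_getElem.1 h.1 i (i + 1) _ hi (Nat.lt_succ_self i)
  · rw [List.getD_eq_default _ _ (not_lt.1 hi)]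
    exact Nat.zero_le _

theorem IsPartition.isLowerSet_cells {lam : List ℕ} (h : IsPartition lam) :
    IsLowerSet (cells lam : Set (ℕ × ℕ)) := fun _ _ hyx hx =>
  mem_cells.2 ((hyx.2.trans_lt (mem_cells.1 hx)).trans_le (h.antitone_getD hyx.1))

/-! ### Standardization -/

section Standardization

variable {nu a : List ℕ} {T : ℕ × ℕ → ℕ} {x y : ℕ × ℕ}

/-- The sorting key of the standardization of `T`: cells are ordered by entry, and cells with
equal entries by column. -/
def stdKey (T : ℕ × ℕ → ℕ) (x : ℕ × ℕ) : ℕ ×ₗ ℕ := toLex (T x, x.2)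

/-- The position of the cell `x` in the standardization order of `T`, counted from `0`; it is also
the index of the corresponding letter of `wordOf nu T`. -/
abbrev stdRank (nu : List ℕ) (T : ℕ × ℕ → ℕ) : ℕ × ℕ → ℕ := keyRank (cells nu) (stdKey T)

theorem stdKey_lt_iff : stdKey T x < stdKey T y ↔ T x < T y ∨ T x = T y ∧ x.2 < y.2 :=
  Prod.Lex.toLex_lt_toLex

theorem stdRank_lt_iff (hx : x ∈ cells nu) :
    stdRank nu T x < stdRank nu T y ↔ T x < T y ∨ T x = T y ∧ x.2 < y.2 :=
  (keyRank_lt_keyRank_iff hx).trans stdKey_lt_iff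

theorem stdz_eq_stdRank_add_one (hx : x ∈ cells nu) : stdz nu T x = stdRank nu T x + 1 := by
  simp only [stdz, if_pos hx, stdRank, keyRank, stdKey_lt_iff]

theorem stdRank_lt_sum (hx : x ∈ cells nu) : stdRank nu T x < nu.sum :=
  card_cells nu ▸ keyRank_lt_card hx

theorem length_wordOf : (wordOf nu T).length = nu.sum := by simp [wordOf]

namespace IsTab

theorem lt_of_row_lt_of_col_le (hT : IsTab nu a T) (hnu : IsPartition nu) (hy : y ∈ cells nu)
    (hrow : x.1 < y.1) (hcol : x.2 ≤ y.2) : T x < T y := by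
  obtain ⟨i, c⟩ := x
  obtain ⟨j, d⟩ := y
  have mem : ∀ {k e}, k ≤ j → e ≤ d → (k, e) ∈ cells nu := fun hk he =>
    hnu.isLowerSet_cells (Prod.mk_le_mk.2 ⟨hk, he⟩) hy
  have col_strict : StrictMonoOn (fun k => T (k, c)) (Set.Iic j) :=
    strictMonoOn_of_lt_succ Set.ordConnected_Iic fun k _ _ hk => hT.2.2.2.1 k c (mem hk hcol)
  have row_weak : MonotoneOn (fun e => T (j, e)) (Set.Iic d) :=
    monotoneOn_of_le_succ Set.ordConnected_Iic fun e _ _ he => hT.2.2.1 j e (mem le_rfl he)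
  exact (col_strict hrow.le Set.self_mem_Iic hrow).trans_le (row_weak hcol Set.self_mem_Iic hcol)

theorem injOn_stdKey (hT : IsTab nu a T) (hnu : IsPartition nu) :
    Set.InjOn (stdKey T) (cells nu) := by
  intro x hx y hy hxy
  obtain ⟨hval, hcol⟩ := Prod.mk.inj (toLex.injective hxy)
  refine Prod.ext (le_antisymm ?_ ?_) hcol <;> by_contra! hrow
  · exact (hT.lt_of_row_lt_of_col_le hnu hx hrow hcol.ge).ne' hval
  · exact (hT.lt_of_row_lt_of_col_le hnu hy hrow hcol.le).ne hval

theorem bijOn_stdRank (hT : IsTab nu a T) (hnu : IsPartition nu) :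
    Set.BijOn (stdRank nu T) (cells nu) (Finset.range nu.sum) :=
  card_cells nu ▸ bijOn_keyRank (hT.injOn_stdKey hnu)

theorem exists_stdRank_eq (hT : IsTab nu a T) (hnu : IsPartition nu) {n : ℕ} (hn : n < nu.sum) :
    ∃ x ∈ cells nu, stdRank nu T x = n :=
  (hT.bijOn_stdRank hnu).surjOn (Finset.mem_coe.2 (Finset.mem_range.2 hn))

theorem card_filter_le_eq_rowOffset (hT : IsTab nu a T) (k : ℕ) :
    ((cells nu).filter (fun x => T x ≤ k)).card = rowOffset a k := by
  have maps : ∀ x ∈ (cells nu).filter (fun x => T x ≤ k), T x - 1 ∈ Finset.range k := by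
    intro x hx
    obtain ⟨hx, hk⟩ := Finset.mem_filter.1 hx
    have := hT.2.1 x hx
    exact Finset.mem_range.2 (by omega)
  rw [Finset.card_eq_sum_card_fiberwise maps, ← sum_range_getD]
  refine Finset.sum_congr rfl fun i hi => ?_
  rw [← hT.2.2.2.2 i, Finset.filter_filter]
  congr 1
  refine Finset.filter_congr fun x hx => ?_
  have := hT.2.1 x hx
  have := Finset.mem_range.1 hi
  omega

theorem sum_eq (hT : IsTab nu a T) : nu.sum = a.sum := by
  let k := max a.length ((cells nu).sup T)
  have bound : ∀ x ∈ cells nu, T x ≤ k := fun x hx => le_max_of_le_right (Finset.le_sup hx)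
  rw [← rowOffset_eq_sum (le_max_left _ _ : a.length ≤ k), ← hT.card_filter_le_eq_rowOffset,
    Finset.filter_true_of_mem bound, card_cells]

theorem stdRank_lt_rowOffset_iff (hT : IsTab nu a T) (hx : x ∈ cells nu) (k : ℕ) :
    stdRank nu T x < rowOffset a k ↔ T x ≤ k := by
  rw [← hT.card_filter_le_eq_rowOffset]
  refine ⟨fun h => ?_, fun h => Finset.card_lt_card ?_⟩
  · contrapose! h
    exact Finset.card_le_card (Finset.monotone_filter_right _ fun y _ hy =>
      stdKey_lt_iff.2 (Or.inl (lt_of_le_of_lt hy h)))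
  · refine (Finset.ssubset_iff_of_subset ?_).2 ⟨x, by simp [hx, h], by simp⟩
    refine Finset.monotone_filter_right _ fun y _ hy => ?_
    exact ((stdKey_lt_iff.1 hy).elim le_of_lt fun hval => hval.1.le).trans h

/-! ### The word of a tableau -/

theorem getD_wordOf_stdRank (hT : IsTab nu a T) (hnu : IsPartition nu) (hx : x ∈ cells nu) :
    (wordOf nu T).getD (stdRank nu T x) 0 = x.1 + 1 := by
  have hcell : (cells nu).filter (fun y => stdz nu T y = stdRank nu T x + 1) = {x} := by
    ext y
    rw [Finset.mem_filter, Finset.mem_singleton]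
    refine ⟨fun ⟨hy, h⟩ => (hT.bijOn_stdRank hnu).injOn hy hx ?_, ?_⟩
    · rwa [stdz_eq_stdRank_add_one hy, Nat.add_right_cancel_iff] at h
    · rintro rfl
      exact ⟨hx, stdz_eq_stdRank_add_one hx⟩
  rw [List.getD_eq_getElem _ _ (length_wordOf.symm ▸ stdRank_lt_sum hx)]
  simp only [wordOf, List.getElem_map, List.getElem_range, hcell, Finset.sum_singleton]

theorem count_take_wordOf (hT : IsTab nu a T) (hnu : IsPartition nu) (k r : ℕ) :
    ((wordOf nu T).take k).count (r + 1) =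
      ((cells nu).filter (fun x => x.1 = r ∧ stdRank nu T x < k)).card := by
  rw [count_take_eq_card_filter_range _ _ _ 0, length_wordOf]
  symm
  refine Finset.card_nbij (stdRank nu T) (fun x hx' => ?_) (fun x hx y hy => ?_) (fun n hn => ?_)
  · obtain ⟨hx, rfl, hk⟩ := Finset.mem_filter.1 hx'
    exact Finset.mem_filter.2
      ⟨Finset.mem_range.2 (lt_min hk (stdRank_lt_sum hx)), hT.getD_wordOf_stdRank hnu hx⟩
  · exact (hT.bijOn_stdRank hnu).injOn (Finset.mem_filter.1 hx).1 (Finset.mem_filter.1 hy).1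
  · obtain ⟨hn, hletter⟩ := Finset.mem_filter.1 hn
    obtain ⟨hk, hn⟩ := lt_min_iff.1 (Finset.mem_range.1 hn)
    obtain ⟨x, hx, rfl⟩ := hT.exists_stdRank_eq hnu hn
    rw [hT.getD_wordOf_stdRank hnu hx] at hletter
    exact ⟨x, Finset.mem_coe.2 (Finset.mem_filter.2 ⟨hx, Nat.succ_injective hletter, hk⟩), rfl⟩

theorem isYam_wordOf (hT : IsTab nu a T) (hnu : IsPartition nu) : IsYam (wordOf nu T) := by
  intro k j
  rw [hT.count_take_wordOf hnu k (j + 1), hT.count_take_wordOf hnu k j]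
  -- Moving up one row lowers the entry, hence the rank.
  refine Finset.card_le_card_of_injOn (fun x => (j, x.2)) ?_ ?_
  · rintro ⟨i, c⟩ hx
    obtain ⟨hx, rfl, hk⟩ := Finset.mem_filter.1 hx
    have hup : (j, c) ∈ cells nu :=
      hnu.isLowerSet_cells (Prod.mk_le_mk.2 ⟨j.le_succ, le_rfl⟩) hx
    exact Finset.mem_coe.2 (Finset.mem_filter.2
      ⟨hup, rfl, ((stdRank_lt_iff hup).2 (Or.inl (hT.2.2.2.1 j c hx))).trans hk⟩)
  · intro x hx y hy hxy
    exact Prod.ext ((Finset.mem_filter.1 hx).2.1.trans (Finset.mem_filter.1 hy).2.1.symm)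
      (Prod.mk.inj hxy).2

theorem hasContent_wordOf (hT : IsTab nu a T) (hnu : IsPartition nu) :
    HasContent (wordOf nu T) nu := by
  refine ⟨fun j => ?_, List.count_eq_zero.2 fun h0 => ?_⟩
  · rw [← List.take_of_length_le (length_wordOf (nu := nu) (T := T)).le,
      hT.count_take_wordOf hnu, ← card_filter_row_cells]
    congr 1
    refine Finset.filter_congr fun x hx => and_iff_left (stdRank_lt_sum hx)
  · obtain ⟨n, hn, h0⟩ := List.getElem_of_mem h0
    obtain ⟨x, hx, rfl⟩ := hT.exists_stdRank_eq hnu (length_wordOf ▸ hn)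
    rw [← List.getD_eq_getElem _ 0 hn, hT.getD_wordOf_stdRank hnu hx] at h0
    exact Nat.succ_ne_zero _ h0

theorem getD_wordOf_succ_le (hT : IsTab nu a T) (hnu : IsPartition nu) {i j : ℕ}
    (hj : j + 1 < a.getD i 0) :
    (wordOf nu T).getD (rowOffset a i + j + 1) 0 ≤ (wordOf nu T).getD (rowOffset a i + j) 0 := by
  have hoff := rowOffset_succ a i
  have hsum := (rowOffset_le_sum a (i + 1)).trans hT.sum_eq.ge
  obtain ⟨x, hx, hxr⟩ := hT.exists_stdRank_eq hnu (n := rowOffset a i + j) (by omega)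
  obtain ⟨y, hy, hyr⟩ := hT.exists_stdRank_eq hnu (n := rowOffset a i + j + 1) (by omega)
  have value : ∀ z ∈ cells nu, rowOffset a i ≤ stdRank nu T z →
      stdRank nu T z < rowOffset a (i + 1) → T z = i + 1 := fun z hz hlo hhi =>
    le_antisymm ((hT.stdRank_lt_rowOffset_iff hz _).1 hhi)
      (not_le.1 fun h => ((hT.stdRank_lt_rowOffset_iff hz _).2 h).not_ge hlo)
  have hxy : T x = T y :=
    (value x hx (by omega) (by omega)).trans (value y hy (by omega) (by omega)).symm
  have hcol : x.2 < y.2 :=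
    ((stdRank_lt_iff hx).1 (by omega : stdRank nu T x < stdRank nu T y)).resolve_left
      hxy.not_lt |>.2
  rw [← hyr, ← hxr, hT.getD_wordOf_stdRank hnu hx, hT.getD_wordOf_stdRank hnu hy]
  by_contra! hrow
  exact (hT.lt_of_row_lt_of_col_le hnu hy (Nat.succ_lt_succ_iff.1 hrow) hcol.le).ne hxy

theorem isRibbonWord_wordOf_iff (hT : IsTab nu a T) (hnu : IsPartition nu) {ov : ℕ → Bool} :
    IsRibbonWord a ov (wordOf nu T) ↔ ∀ i, i + 1 < a.length → ov i = true →
      (wordOf nu T).getD (rowOffset a (i + 1) - 1) 0 <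
        (wordOf nu T).getD (rowOffset a (i + 1)) 0 :=
  ⟨fun h => h.2.2, fun h => ⟨length_wordOf.trans hT.sum_eq,
    fun _ _ _ hj => hT.getD_wordOf_succ_le hnu hj, h⟩⟩

theorem isDescent_stdz_iff (hT : IsTab nu a T) (hnu : IsPartition nu) {n : ℕ} :
    IsDescent nu (stdz nu T) n ↔
      0 < n ∧ n < nu.sum ∧ (wordOf nu T).getD (n - 1) 0 < (wordOf nu T).getD n 0 := by
  constructor
  · rintro ⟨x, hx, y, hy, hxn, hyn, hrow⟩
    rw [stdz_eq_stdRank_add_one hx] at hxn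
    rw [stdz_eq_stdRank_add_one hy, Nat.add_right_cancel_iff] at hyn
    subst hxn
    refine ⟨Nat.succ_pos _, hyn ▸ stdRank_lt_sum hy, ?_⟩
    rw [Nat.add_sub_cancel, ← hyn, hT.getD_wordOf_stdRank hnu hx,
      hT.getD_wordOf_stdRank hnu hy]
    exact Nat.succ_lt_succ hrow
  · rintro ⟨hpos, hn, hlt⟩
    obtain ⟨x, hx, hxn⟩ := hT.exists_stdRank_eq hnu (n := n - 1) (by omega)
    obtain ⟨y, hy, hyn⟩ := hT.exists_stdRank_eq hnu hn
    rw [← hxn, ← hyn, hT.getD_wordOf_stdRank hnu hx, hT.getD_wordOf_stdRank hnu hy] at hlt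
    refine ⟨x, hx, y, hy, ?_, ?_, Nat.succ_lt_succ_iff.1 hlt⟩
    · rw [stdz_eq_stdRank_add_one hx, hxn, Nat.sub_add_cancel hpos]
    · rw [stdz_eq_stdRank_add_one hy, hyn]

theorem finite_isDescent_stdz (hT : IsTab nu a T) (hnu : IsPartition nu) :
    {n | IsDescent nu (stdz nu T) n}.Finite :=
  (Set.finite_Iio nu.sum).subset fun _ hn => ((hT.isDescent_stdz_iff hnu).1 hn).2.1

/-! ### Overlaps, descents and critical numbers -/

theorem card_overlaps_le_card_descents (hT : IsTab nu a T) (hnu : IsPartition nu)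
    (ha : ∀ x ∈ a, 0 < x) {ov : ℕ → Bool} (hw : IsRibbonWord a ov (wordOf nu T)) :
    ((Finset.range (a.length - 1)).filter (fun i => ov i = true)).card ≤
      Nat.card {n : ℕ // IsDescent nu (stdz nu T) n} := by
  have mono := strictMonoOn_rowOffset ha
  have gap : ∀ {i}, i ∈ Finset.range (a.length - 1) → i + 1 < a.length := fun hi => by
    have := Finset.mem_range.1 hi
    omega
  rw [← Set.ncard_coe_finset]
  refine Set.ncard_le_ncard_of_injOn (fun i => rowOffset a (i + 1)) (fun i hi => ?_)
    (fun i hi j hj hij => ?_) (hT.finite_isDescent_stdz hnu)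
  · obtain ⟨hi, hov⟩ := Finset.mem_filter.1 hi
    have hlow := mono (Nat.zero_le _) (gap hi).le (Nat.succ_pos i)
    have hupp := mono (gap hi).le Set.self_mem_Iic (gap hi)
    have hsum := (rowOffset_le_sum a a.length).trans hT.sum_eq.ge
    exact (hT.isDescent_stdz_iff hnu).2
      ⟨Nat.zero_lt_of_lt hlow, hupp.trans_le hsum, hw.2.2 i (gap hi) hov⟩
  · exact Nat.succ_injective (mono.injOn (gap (Finset.mem_filter.1 hi).1).le
      (gap (Finset.mem_filter.1 hj).1).le hij)

theorem isRibbonWord_wordOf_iff_critical (hT : IsTab nu a T) (hnu : IsPartition nu)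
    {ov : ℕ → Bool} :
    IsRibbonWord a ov (wordOf nu T) ↔
      ∀ j, CriticalNum nu a T j ∨ NegligibleNum nu a T j → ov (j - 2) = false := by
  rw [hT.isRibbonWord_wordOf_iff hnu]
  constructor
  · rintro h j hj
    obtain ⟨i, rfl⟩ : ∃ i, j = i + 2 := Nat.exists_eq_add_of_le' (hj.elim (·.1) (·.1))
    have hi : i + 1 < a.length := hj.elim (·.2.1) (·.2.1)
    refine Bool.eq_false_of_not_eq_true fun hov => (h i hi hov).not_ge ?_
    exact hj.elim (·.2.2.ge) (·.2.2.le)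
  · intro h i hi hov
    by_contra! hle
    have hcrit : CriticalNum nu a T (i + 2) ∨ NegligibleNum nu a T (i + 2) :=
      hle.eq_or_lt.imp (fun he => ⟨Nat.le_add_left 2 i, hi, he.symm⟩)
        fun hlt => ⟨Nat.le_add_left 2 i, hi, hlt⟩
    exact absurd hov (Bool.eq_false_iff.1 (h (i + 2) hcrit))

end IsTab

end Standardization

theorem companion_tableau_criterion_general
    (a p nu : List ℕ) (ha : ∀ x ∈ a, 0 < x) (hp : IsOverlapSeq a p) (hnu : IsPartition nu)
    (T : ℕ × ℕ → ℕ) (hT : IsTab nu a T) :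
    ((IsRibbonWord a (ovOf p) (wordOf nu T) ∧ IsYam (wordOf nu T) ∧
        HasContent (wordOf nu T) nu) →
      p.getD 0 0 ≤ Nat.card {n : ℕ // IsDescent nu (stdz nu T) n}) ∧
    ((IsRibbonWord a (ovOf p) (wordOf nu T) ∧ IsYam (wordOf nu T) ∧
        HasContent (wordOf nu T) nu) ↔
      ∀ j, CriticalNum nu a T j ∨ NegligibleNum nu a T j → ovOf p (j - 2) = false) := by
  have hauto : IsYam (wordOf nu T) ∧ HasContent (wordOf nu T) nu :=
    ⟨hT.isYam_wordOf hnu, hT.hasContent_wordOf hnu⟩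
  rw [and_iff_left hauto, hp.getD_zero_eq_card]
  exact ⟨hT.card_overlaps_le_card_descents hnu ha, hT.isRibbonWord_wordOf_iff_critical hnu⟩

/-- Theorem `corl2`: let `a` be a partition with parts ≥ 2 with overlapping
partition `p`, `nu` a partition of `|a|`, and `T ∈ Tab(nu, a)`.
(a) If `φ_{R_a^p}(T)` is an LR tableau then the descent set of `T̂` has at least `p₁` elements.
(b) If `T` has no negligible critical numbers and its critical set is nonempty, then
`φ_{R_a^p}(T)` is an LR tableau iff every critical number `j` of `T` is `p`-ineffective,
i.e. rows `j−1` and `j` of `R_a^p` do not overlap. -/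
theorem companion_tableau_criterion
    (a p nu : List ℕ) (ha : IsPartition a) (h2 : PartsGE a 2)
    (hp : IsOverlapSeq a p) (hnu : IsPartition nu) (hsum : nu.sum = a.sum)
    (T : ℕ × ℕ → ℕ) (hT : IsTab nu a T) :
    ((IsRibbonWord a (ovOf p) (wordOf nu T) ∧ IsYam (wordOf nu T) ∧
        HasContent (wordOf nu T) nu) →
      p.getD 0 0 ≤ Nat.card {n : ℕ // IsDescent nu (stdz nu T) n}) ∧
    ((∀ j, ¬ NegligibleNum nu a T j) → (∃ j, CriticalNum nu a T j) →
      ((IsRibbonWord a (ovOf p) (wordOf nu T) ∧ IsYam (wordOf nu T) ∧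
          HasContent (wordOf nu T) nu) ↔
        ∀ j, CriticalNum nu a T j → ovOf p (j - 2) = false)) := by
  obtain ⟨hdesc, hLR⟩ := companion_tableau_criterion_general a p nu ha.2 hp hnu T hT
  exact ⟨hdesc, fun hneg _ => hLR.trans (by simp only [hneg, or_false])⟩

end RibbonSupport
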